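/- If p ∈ ℤⁿ satisfies gcd(p₁,…,pₙ) = 1, then for any a ∈ ℤⁿ, setting κ' = gcd{aᵢpⱼ − aⱼpᵢ : i < j}, the vector a − ⟨u,a⟩·p is divisible by κ' in ℤⁿ, where u ∈ ℤⁿ is any vector with ⟨u,p⟩ = 1. -/

import Mathlib

/-- If p ∈ ℤⁿ satisfies gcd(p₁,…,pₙ) = 1, then for any a ∈ ℤⁿ, setting
κ' = gcd{aᵢpⱼ − aⱼpᵢ : i < j}, the vector a − ⟨u,a⟩·p is divisible by κ' in ℤⁿ,
where u ∈ ℤⁿ is any vector with ⟨u,p⟩ = 1. -/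
theorem gcd_minors_dvd_combination (n : ℕ) (p a u : Fin n → ℤ)
    (hgcd : Finset.univ.gcd p = 1) (hu : ∑ j, u j * p j = 1) :
    ∀ i, (Finset.univ.filter (fun ij : Fin n × Fin n => ij.1 < ij.2)).gcd
        (fun ij => a ij.1 * p ij.2 - a ij.2 * p ij.1)
      ∣ a i - (∑ j, u j * a j) * p i := by
  intro i
  have key : a i - (∑ j, u j * a j) * p i = ∑ j, u j * (a i * p j - a j * p i) := by
    calc a i - (∑ j, u j * a j) * p i
        = a i * (∑ j, u j * p j) - (∑ j, u j * a j) * p i := by rw [hu, mul_one]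
      _ = ∑ j, u j * (a i * p j - a j * p i) := by
        rw [Finset.mul_sum, Finset.sum_mul, ← Finset.sum_sub_distrib]
        exact Finset.sum_congr rfl (fun j _ => by ring)
  rw [key]
  refine Finset.dvd_sum (fun j _ => Dvd.dvd.mul_left ?_ _)
  rcases lt_trichotomy i j with h | h | h
  · exact Finset.gcd_dvd (f := fun ij : Fin n × Fin n => a ij.1 * p ij.2 - a ij.2 * p ij.1)
      (b := (i, j)) (by simpa using h)
  · subst h
    simp
  · rw [← neg_sub, dvd_neg]
    exact Finset.gcd_dvd (f := fun ij : Fin n × Fin n => a ij.1 * p ij.2 - a ij.2 * p ij.1)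
      (b := (j, i)) (by simpa using h)
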